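/- Cut-off Caccioppoli estimate (penultimate estimate in the proof of Lemma 3.1, smooth interior form): let u be B-harmonic on D* and let η : ℝ^d → ℝ be continuously differentiable with support a compact subset of D*. Then ∫_{D*} A∇(ηu)·∇(ηu) dx ≤ (2 a_max + 1) ∫_{D*} u² |∇η|² dx + ( 2‖div b‖_∞ + ‖b‖_∞² (1 + a_min⁻¹) ) ∫_{D*} η² u² dx. -/

import Mathlib

open MeasureTheory

/-- Partial derivative in direction `i`. -/
noncomputable def pd (d : ℕ) (i : Fin d) (f : (Fin d → ℝ) → ℝ) (x : Fin d → ℝ) : ℝ :=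
  fderiv ℝ f x (Pi.single i 1)

/-- The integrand `A ∇f · ∇g` at a point. -/
noncomputable def aForm (d : ℕ) (A : (Fin d → ℝ) → Matrix (Fin d) (Fin d) ℝ)
    (f g : (Fin d → ℝ) → ℝ) (x : Fin d → ℝ) : ℝ :=
  ∑ i, ∑ j, A x i j * pd d j f x * pd d i g x

/-- Divergence of a vector field. -/
noncomputable def divg (d : ℕ) (b : (Fin d → ℝ) → Fin d → ℝ) (x : Fin d → ℝ) : ℝ :=
  ∑ i, fderiv ℝ (fun y => b y i) x (Pi.single i 1)

/-- `u` is B-harmonic on `Dstar`: it is `C¹` and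
`∫_{D*} (A ∇u)·∇v − u b·∇v dx = 0` for all `C¹` functions `v` with compact support in `Dstar`. -/
def BHarmonic (d : ℕ) (Dstar : Set (Fin d → ℝ))
    (A : (Fin d → ℝ) → Matrix (Fin d) (Fin d) ℝ)
    (b : (Fin d → ℝ) → Fin d → ℝ) (u : (Fin d → ℝ) → ℝ) : Prop :=
  ContDiff ℝ 1 u ∧
  ∀ v : (Fin d → ℝ) → ℝ, ContDiff ℝ 1 v → HasCompactSupport v → tsupport v ⊆ Dstar →
    ∫ x in Dstar, (aForm d A u v x - u x * ∑ i, b x i * pd d i v x) = 0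

theorem pd_mul_aux (d : ℕ) (i : Fin d) (f g : (Fin d → ℝ) → ℝ) (hf : ContDiff ℝ 1 f)
    (hg : ContDiff ℝ 1 g) (x : Fin d → ℝ) :
    pd d i (fun y => f y * g y) x = f x * pd d i g x + g x * pd d i f x := by
  unfold pd
  rw [fderiv_fun_mul (hf.differentiable one_ne_zero x) (hg.differentiable one_ne_zero x)]
  simp

theorem pd_cont_aux (d : ℕ) (i : Fin d) (f : (Fin d → ℝ) → ℝ) (hf : ContDiff ℝ 1 f) :
    Continuous (pd d i f) := by
  unfold pd
  exact (hf.continuous_fderiv one_ne_zero).clm_apply continuous_const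

theorem aForm_cont_aux (d : ℕ) (A : (Fin d → ℝ) → Matrix (Fin d) (Fin d) ℝ)
    (hA : Continuous A) (f g : (Fin d → ℝ) → ℝ) (hf : ContDiff ℝ 1 f) (hg : ContDiff ℝ 1 g) :
    Continuous (aForm d A f g) := by
  unfold aForm
  refine continuous_finset_sum _ fun i _ => continuous_finset_sum _ fun j _ => ?_
  exact ((hA.matrix_elem i j).mul (pd_cont_aux d j f hf)).mul (pd_cont_aux d i g hg)

/-- Algebraic identity for the quadratic form. -/
theorem quad_aux (d : ℕ) (M : Matrix (Fin d) (Fin d) ℝ) (hM : M.IsSymm) (p q : Fin d → ℝ)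
    (e u : ℝ) :
    (∑ i, ∑ j, M i j * (e * q j + u * p j) * (e * q i + u * p i))
      = (∑ i, ∑ j, M i j * q j * (e * (e * q i + u * p i) + e * u * p i))
        + u ^ 2 * ∑ i, ∑ j, M i j * p j * p i := by
  have hs : (∑ i, ∑ j, M i j * p j * q i) = ∑ i, ∑ j, M i j * q j * p i := by
    rw [Finset.sum_comm]
    refine Finset.sum_congr rfl fun i _ => Finset.sum_congr rfl fun j _ => ?_
    rw [hM.apply i j]; ring
  have e1 : (∑ i, ∑ j, M i j * (e * q j + u * p j) * (e * q i + u * p i))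
      = e ^ 2 * (∑ i, ∑ j, M i j * q j * q i) + e * u * (∑ i, ∑ j, M i j * q j * p i)
        + e * u * (∑ i, ∑ j, M i j * p j * q i) + u ^ 2 * ∑ i, ∑ j, M i j * p j * p i := by
    simp only [Finset.mul_sum, ← Finset.sum_add_distrib]
    refine Finset.sum_congr rfl fun i _ => Finset.sum_congr rfl fun j _ => ?_
    ring
  have e2 : (∑ i, ∑ j, M i j * q j * (e * (e * q i + u * p i) + e * u * p i))
      = e ^ 2 * (∑ i, ∑ j, M i j * q j * q i) + 2 * (e * u) * (∑ i, ∑ j, M i j * q j * p i) := by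
    simp only [Finset.mul_sum, ← Finset.sum_add_distrib]
    refine Finset.sum_congr rfl fun i _ => Finset.sum_congr rfl fun j _ => ?_
    ring
  rw [e1, e2, hs]; ring

/-- The drift term. -/
theorem drift_aux (d : ℕ) (b p w : Fin d → ℝ) (e u B a Q : ℝ) (ha : 0 < a)
    (hB : ∑ i, b i ^ 2 ≤ B ^ 2) (hQ : a * ∑ i, w i ^ 2 ≤ Q) :
    2 * (u * ∑ i, b i * (e * w i + e * u * p i))
      ≤ Q + u ^ 2 * (∑ i, p i ^ 2) + B ^ 2 * (1 + a⁻¹) * (e ^ 2 * u ^ 2) := by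
  have h1 : 2 * (u * ∑ i, b i * (e * w i + e * u * p i))
      ≤ a * (∑ i, w i ^ 2) + u ^ 2 * (∑ i, p i ^ 2)
        + (1 + a⁻¹) * (e ^ 2 * u ^ 2) * ∑ i, b i ^ 2 := by
    simp only [Finset.mul_sum, ← Finset.sum_add_distrib]
    refine Finset.sum_le_sum fun i _ => ?_
    have k1 : 0 ≤ a * (w i - a⁻¹ * (e * u * b i)) ^ 2 := by positivity
    have k2 : 0 ≤ (u * p i - e * u * b i) ^ 2 := by positivity
    have k3 : a * (w i - a⁻¹ * (e * u * b i)) ^ 2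
        = a * w i ^ 2 - 2 * (w i * (e * u * b i)) + a⁻¹ * (e * u * b i) ^ 2 := by
      field_simp; ring
    nlinarith
  have h2 : (1 + a⁻¹) * (e ^ 2 * u ^ 2) * ∑ i, b i ^ 2
      ≤ (1 + a⁻¹) * (e ^ 2 * u ^ 2) * B ^ 2 :=
    mul_le_mul_of_nonneg_left hB (by positivity)
  nlinarith

theorem cutoff_caccioppoli_estimate
    (d : ℕ) (hd : 0 < d)
    (Dstar : Set (Fin d → ℝ)) (hopen : IsOpen Dstar) (hbdd : Bornology.IsBounded Dstar)
    (A : (Fin d → ℝ) → Matrix (Fin d) (Fin d) ℝ)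
    (hAcont : Continuous A) (hAsymm : ∀ x, (A x).IsSymm)
    (amin amax : ℝ) (h0 : 0 < amin) (h1 : amin ≤ amax)
    (hellip : ∀ (x ξ : Fin d → ℝ),
      amin * ∑ i, ξ i ^ 2 ≤ (∑ i, ∑ j, A x i j * ξ j * ξ i) ∧
      (∑ i, ∑ j, A x i j * ξ j * ξ i) ≤ amax * ∑ i, ξ i ^ 2)
    (b : (Fin d → ℝ) → Fin d → ℝ) (hb : ContDiff ℝ 1 b)
    (bBound divbBound : ℝ)
    (hbB : ∀ x, Real.sqrt (∑ i, b x i ^ 2) ≤ bBound)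
    (hdivbB : ∀ x, |divg d b x| ≤ divbBound)
    (u : (Fin d → ℝ) → ℝ) (hu : BHarmonic d Dstar A b u)
    (η : (Fin d → ℝ) → ℝ) (hη : ContDiff ℝ 1 η)
    (hηc : HasCompactSupport η) (hηs : tsupport η ⊆ Dstar) :
    (∫ x in Dstar, aForm d A (fun y => η y * u y) (fun y => η y * u y) x)
      ≤ (2 * amax + 1) * (∫ x in Dstar, u x ^ 2 * ∑ i, (pd d i η x) ^ 2)
        + (2 * divbBound + bBound ^ 2 * (1 + amin⁻¹)) *
            ∫ x in Dstar, η x ^ 2 * u x ^ 2 := by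
  obtain ⟨huC, hharm⟩ := hu
  have hwC : ContDiff ℝ 1 (fun y => η y * u y) := hη.mul huC
  have hvC : ContDiff ℝ 1 (fun y => η y * (η y * u y)) := hη.mul hwC
  have hv0 := hharm _ hvC hηc.mul_right ((tsupport_mul_subset_left).trans hηs)
  have hI : ∀ f : (Fin d → ℝ) → ℝ, Continuous f → IntegrableOn f Dstar := fun f hf =>
    (hf.continuousOn.integrableOn_compact hbdd.isCompact_closure).mono_set subset_closure
  have hdiv : 0 ≤ divbBound := (abs_nonneg _).trans (hdivbB 0)
  have hFc : Continuous (fun x => aForm d A u (fun y => η y * (η y * u y)) x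
      - u x * ∑ i, b x i * pd d i (fun y => η y * (η y * u y)) x) := by
    refine (aForm_cont_aux d A hAcont _ _ huC hvC).sub (huC.continuous.mul ?_)
    refine continuous_finset_sum _ fun i _ => ?_
    exact ((continuous_apply i).comp hb.continuous).mul (pd_cont_aux d i _ hvC)
  have hPc : Continuous (fun x => u x ^ 2 * ∑ i, (pd d i η x) ^ 2) := by
    refine (huC.continuous.pow 2).mul (continuous_finset_sum _ fun i _ => ?_)
    exact (pd_cont_aux d i _ hη).pow 2
  have hWc : Continuous (fun x => η x ^ 2 * u x ^ 2) :=
    (hη.continuous.pow 2).mul (huC.continuous.pow 2)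
  have iF := (hI _ hFc).const_mul 2
  have iP := (hI _ hPc).const_mul (2 * amax + 1)
  have iW := (hI _ hWc).const_mul (2 * divbBound + bBound ^ 2 * (1 + amin⁻¹))
  have key := setIntegral_mono (μ := volume) (s := Dstar)
    (hI _ (aForm_cont_aux d A hAcont _ _ hwC hwC)) ((iF.add iP).add iW) (fun x => ?_)
  · refine key.trans (le_of_eq ?_)
    rw [integral_add' (iF.add iP) iW, integral_add' iF iP, integral_const_mul, integral_const_mul,
      integral_const_mul, hv0]
    ring
  · simp only [Pi.add_apply]
    have hw : ∀ i, pd d i (fun y => η y * u y) x = η x * pd d i u x + u x * pd d i η x :=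
      fun i => pd_mul_aux d i η u hη huC x
    have hv : ∀ i, pd d i (fun y => η y * (η y * u y)) x
        = η x * (η x * pd d i u x + u x * pd d i η x) + η x * u x * pd d i η x := by
      intro i
      rw [pd_mul_aux d i η _ hη hwC x, hw i]
    simp only [aForm, hw, hv]
    have hq := quad_aux d (A x) (hAsymm x) (fun i => pd d i η x) (fun i => pd d i u x) (η x) (u x)
    have hB : ∑ i, b x i ^ 2 ≤ bBound ^ 2 := (Real.sqrt_le_left
      ((Real.sqrt_nonneg _).trans (hbB x))).1 (hbB x)
    have hd1 := drift_aux d (b x) (fun i => pd d i η x)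
      (fun i => η x * pd d i u x + u x * pd d i η x) (η x) (u x) bBound amin _ h0 hB
      (hellip x (fun i => η x * pd d i u x + u x * pd d i η x)).1
    have hη2 := mul_le_mul_of_nonneg_left (hellip x (fun i => pd d i η x)).2 (sq_nonneg (u x))
    have hdd : 0 ≤ divbBound * (η x ^ 2 * u x ^ 2) := by positivity
    beta_reduce at hq hd1 hη2
    linarith
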